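/- arXiv:2605.22513 — 2 statements merged into one kernel-verified Lean document; each statement's English description precedes it below -/
import Mathlib

section
/- Let ℓ : ℝⁿ → ℝ be twice continuously differentiable, let γ > 0, and suppose w : ℝⁿ → ℝⁿ is differentiable and satisfies ∇ℓ(w(ω)) + γ(w(ω) − ω) = 0 for every ω ∈ ℝⁿ. Let ℓ_test : ℝⁿ → ℝ be differentiable. Fix ω ∈ ℝⁿ and set Q := Id + γ⁻¹·∇²ℓ(w(ω)); assume Q is invertible (it is automatically self-adjoint, since Hessians are). Then the composite function g(ω') := ℓ_test(w(ω')) is differentiable at ω with gradient ∇g(ω) = Q⁻¹ · ∇ℓ_test(w(ω)). -/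
open RealInnerProductSpace

/-!
Dividing the stationarity condition by `γ` gives `w ω' + γ⁻¹ ∇ℓ(w ω') = ω'`: the map `w` is a right
inverse of `x ↦ x + γ⁻¹ ∇ℓ(x)`, whose derivative at `w ω` is `Q`. As `w` is continuous, it is
therefore differentiable at `ω` with derivative `Q⁻¹`. By the chain rule the gradient of
`ℓtest ∘ w` at `ω` is the adjoint of `Q⁻¹` applied to `∇ℓtest(w ω)`, and `Q⁻¹` is its own adjoint
because Hessians are symmetric.
-/

open ContinuousLinearMap Filter InnerProductSpace Topology

section ImplicitDifferentiation

variable {𝕜 E : Type*} [NontriviallyNormedField 𝕜] [NormedAddCommGroup E] [NormedSpace 𝕜 E]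

theorem hasFDerivAt_of_eventually_add_smul_sub_eq_zero {F w : E → E} {c : 𝕜} {a : E} {Q : E ≃L[𝕜] E}
    (hc : c ≠ 0) (hF : DifferentiableAt 𝕜 F (w a)) (hw : ContinuousAt w a)
    (hstat : ∀ᶠ b in 𝓝 a, F (w b) + c • (w b - b) = 0)
    (hQ : (Q : E →L[𝕜] E) = .id 𝕜 E + c⁻¹ • fderiv 𝕜 F (w a)) :
    HasFDerivAt w (Q.symm : E →L[𝕜] E) a := by
  have hderiv : HasFDerivAt (fun x ↦ x + c⁻¹ • F x) (Q : E →L[𝕜] E) (w a) :=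
    hQ ▸ (hasFDerivAt_id (w a)).add (hF.hasFDerivAt.const_smul c⁻¹)
  refine hderiv.of_local_left_inverse hw ?_
  filter_upwards [hstat] with b hb
  rw [eq_neg_of_add_eq_zero_left hb, smul_neg, inv_smul_smul₀ hc]
  abel

end ImplicitDifferentiation

section Adjoint

variable {𝕜 E F : Type*} [RCLike 𝕜]
  [NormedAddCommGroup E] [InnerProductSpace 𝕜 E] [CompleteSpace E]
  [NormedAddCommGroup F] [InnerProductSpace 𝕜 F] [CompleteSpace F]

theorem isSelfAdjoint_coe_symm {Q : E ≃L[𝕜] E} (hQ : IsSelfAdjoint (Q : E →L[𝕜] E)) :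
    IsSelfAdjoint (Q.symm : E →L[𝕜] E) := by
  rw [isSelfAdjoint_iff_isSymmetric] at hQ ⊢
  intro x y
  simpa using (hQ (Q.symm x) (Q.symm y)).symm

theorem hasGradientAt_comp_of_hasFDerivAt {f : F → 𝕜} {f' : F} {w : E → F} {w' : E →L[𝕜] F} {a : E}
    (hf : HasGradientAt f f' (w a)) (hw : HasFDerivAt w w' a) :
    HasGradientAt (f ∘ w) (adjoint w' f') a := by
  rw [hasGradientAt_iff_hasFDerivAt] at hf ⊢
  refine (hf.comp a hw).congr_fderiv ?_
  ext x
  simp [adjoint_inner_left]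

end Adjoint

section Hessian

variable {E : Type*} [NormedAddCommGroup E] [InnerProductSpace ℝ E] [CompleteSpace E]
  {f : E → ℝ} {x : E}

theorem differentiableAt_gradient_iff :
    DifferentiableAt ℝ (gradient f) x ↔ DifferentiableAt ℝ (fderiv ℝ f) x :=
  (toDual ℝ E).symm.comp_differentiableAt_iff

theorem inner_fderiv_gradient_left (u v : E) :
    ⟪fderiv ℝ (gradient f) x u, v⟫ = fderiv ℝ (fderiv ℝ f) x u v := by
  have hcomp : fderiv ℝ (gradient f) x = _ := (toDual ℝ E).symm.comp_fderiv
  rw [hcomp]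
  exact toDual_symm_apply

theorem isSelfAdjoint_fderiv_gradient_iff :
    IsSelfAdjoint (fderiv ℝ (gradient f) x) ↔ IsSymmSndFDerivAt ℝ f x := by
  rw [isSelfAdjoint_iff_isSymmetric]
  refine forall₂_congr fun u v ↦ ?_
  rw [coe_coe, inner_fderiv_gradient_left, real_inner_comm, inner_fderiv_gradient_left]

theorem isSelfAdjoint_fderiv_gradient (hf : ∀ᶠ y in 𝓝 x, DifferentiableAt ℝ f y)
    (hf' : DifferentiableAt ℝ (fderiv ℝ f) x) : IsSelfAdjoint (fderiv ℝ (gradient f) x) :=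
  isSelfAdjoint_fderiv_gradient_iff.mpr <| second_derivative_symmetric_of_eventually
    (hf.mono fun _ hy ↦ hy.hasFDerivAt) hf'.hasFDerivAt

end Hessian

theorem meta_gradient_formula_general {E : Type*}
    [NormedAddCommGroup E] [InnerProductSpace ℝ E] [CompleteSpace E]
    {ℓ ℓtest : E → ℝ} {γ : ℝ} {w : E → E} {ω p : E} {Q : E ≃L[ℝ] E}
    (hℓ : ∀ᶠ x in 𝓝 (w ω), DifferentiableAt ℝ ℓ x)
    (hℓ' : DifferentiableAt ℝ (fderiv ℝ ℓ) (w ω)) (hγ : γ ≠ 0) (hw : ContinuousAt w ω)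
    (hstat : ∀ᶠ ω' in 𝓝 ω, gradient ℓ (w ω') + γ • (w ω' - ω') = 0)
    (hℓtest : HasGradientAt ℓtest p (w ω))
    (hQ : (Q : E →L[ℝ] E) = .id ℝ E + γ⁻¹ • fderiv ℝ (gradient ℓ) (w ω)) :
    HasGradientAt (ℓtest ∘ w) (Q.symm p) ω := by
  have hderiv : HasFDerivAt w (Q.symm : E →L[ℝ] E) ω :=
    hasFDerivAt_of_eventually_add_smul_sub_eq_zero hγ (differentiableAt_gradient_iff.mpr hℓ')
      hw hstat hQ
  have hself : IsSelfAdjoint (Q : E →L[ℝ] E) :=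
    hQ ▸ (IsSelfAdjoint.one _).add
      ((IsSelfAdjoint.all γ⁻¹).smul (isSelfAdjoint_fderiv_gradient hℓ hℓ'))
  simpa [(isSelfAdjoint_coe_symm hself).adjoint_eq] using
    hasGradientAt_comp_of_hasFDerivAt hℓtest hderiv

/-- **Meta-gradient formula.** If `w` satisfies the stationarity condition of the inner
problem and `Q = Id + γ⁻¹ ∇²ℓ(w(ω))` is invertible, then `g(ω') = ℓ_test(w(ω'))` is
differentiable at `ω` with gradient `∇g(ω) = Q⁻¹ ∇ℓ_test(w(ω))`. -/
theorem meta_gradient_formula {n : ℕ}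
    (ℓ : EuclideanSpace ℝ (Fin n) → ℝ) (hℓ : ContDiff ℝ 2 ℓ)
    (γ : ℝ) (hγ : 0 < γ)
    (w : EuclideanSpace ℝ (Fin n) → EuclideanSpace ℝ (Fin n))
    (hw : Differentiable ℝ w)
    (hstat : ∀ ω, gradient ℓ (w ω) + γ • (w ω - ω) = 0)
    (ℓtest : EuclideanSpace ℝ (Fin n) → ℝ) (hℓtest : Differentiable ℝ ℓtest)
    (ω : EuclideanSpace ℝ (Fin n))
    (Q : EuclideanSpace ℝ (Fin n) →L[ℝ] EuclideanSpace ℝ (Fin n))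
    (hQ : Q = ContinuousLinearMap.id ℝ (EuclideanSpace ℝ (Fin n))
            + γ⁻¹ • fderiv ℝ (gradient ℓ) (w ω))
    (Qinv : EuclideanSpace ℝ (Fin n) →L[ℝ] EuclideanSpace ℝ (Fin n))
    (hQinv₁ : Q.comp Qinv = ContinuousLinearMap.id ℝ (EuclideanSpace ℝ (Fin n)))
    (hQinv₂ : Qinv.comp Q = ContinuousLinearMap.id ℝ (EuclideanSpace ℝ (Fin n))) :
    DifferentiableAt ℝ (fun ω' => ℓtest (w ω')) ω ∧
    gradient (fun ω' => ℓtest (w ω')) ω = Qinv (gradient ℓtest (w ω)) := by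
  have hℓ' : Differentiable ℝ (fderiv ℝ ℓ) :=
    (hℓ.fderiv_right (m := 1) (by norm_num)).differentiable one_ne_zero
  have hgrad : HasGradientAt (ℓtest ∘ w) (Qinv (gradient ℓtest (w ω))) ω :=
    meta_gradient_formula_general (Q := .equivOfInverse' Q Qinv hQinv₁ hQinv₂)
      (.of_forall (hℓ.differentiable two_ne_zero)) (hℓ' _) hγ.ne' (hw ω).continuousAt
      (.of_forall hstat) (hℓtest _).hasGradientAt hQ
  exact ⟨hgrad.differentiableAt, hgrad.gradient⟩
end

section
/- Let ℓ : ℝⁿ → ℝ be twice continuously differentiable with ∇ℓ Lipschitz with constant L ≥ 0 and ‖∇²ℓ(ψ)‖ ≤ H for all ψ ∈ ℝⁿ, and let γ > H ≥ 0. Fix ω_∞ ∈ ℝⁿ and define the regularized adaptation objective f(ψ) := ℓ(ψ) + (γ/2)‖ψ − ω_∞‖², with unique global minimizer ω̃*. Let ω_opt ∈ ℝⁿ satisfy ‖ω_opt − ω_∞‖ ≤ ρ. Starting from ψ_0 = ω_∞, run K ≥ 0 gradient-descent steps ψ_{k+1} := ψ_k − (1/(L+γ))·∇f(ψ_k) and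 set ω* := ψ_K. Then ℓ(ω*) − ℓ(ω_opt) ≤ γρ²/2 + ((L+γ)/2)·(1 − (γ−H)/(L+γ))^K · ‖ω_∞ − ω̃*‖². (Proposition 2, Adaptation Error, of the paper.) -/
open RealInnerProductSpace

/-!
The penalty `γ / 2 * ‖x - a‖ ^ 2` shifts the curvature bounds `-H` and `L` of `ℓ` to `γ - H` and
`L + γ`. Gradient descent with step `1 / (L + γ)` therefore contracts the squared distance to the
minimizer `ω̃` of the penalized loss `f` by `1 - (γ - H) / (L + γ)`, and `f` exceeds its minimum by
at most `(L + γ) / 2` times that squared distance. To return to `ℓ`, use `ℓ ≤ f` at the last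
iterate, and `f ω̃ ≤ f ω_opt`, which costs the penalty at `ω_opt`, at most `γ * ρ ^ 2 / 2`.
-/

section QuadraticBounds

open scoped Gradient NNReal

variable {E : Type*} [NormedAddCommGroup E] [InnerProductSpace ℝ E] [CompleteSpace E]

/-- `f` lies below each of its first-order expansions plus a quadratic of curvature `M`, as an
`M`-smooth function does. It is stated in terms of the increment `v`, and `M` may be negative. -/
def QuadraticUpperBound (f : E → ℝ) (M : ℝ) : Prop :=
  ∀ x v, f (x + v) ≤ f x + ⟪∇ f x, v⟫ + M / 2 * ‖v‖ ^ 2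

/-- `f` lies above each of its first-order expansions plus a quadratic of curvature `m`: this is
first-order strong convexity for `0 < m` and weak convexity for `m < 0`. -/
def QuadraticLowerBound (f : E → ℝ) (m : ℝ) : Prop :=
  ∀ x v, f x + ⟪∇ f x, v⟫ + m / 2 * ‖v‖ ^ 2 ≤ f (x + v)

variable {f : E → ℝ} {m M : ℝ} {C : ℝ≥0} {ω : E}

theorem abs_sub_sub_inner_gradient_le (hf : Differentiable ℝ f) (hC : LipschitzWith C (∇ f))
    (x v : E) : |f (x + v) - f x - ⟪∇ f x, v⟫| ≤ C / 2 * ‖v‖ ^ 2 := by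
  have hasDerivAt_remainder (t : ℝ) :
      HasDerivAt (fun t : ℝ => f (x + t • v) - f x - t * ⟪∇ f x, v⟫)
        ⟪∇ f (x + t • v) - ∇ f x, v⟫ t := by
    have hline : HasDerivAt (fun t : ℝ => x + t • v) v t := by
      simpa using ((hasDerivAt_id t).smul_const v).const_add x
    have hcomp := (hf (x + t • v)).hasFDerivAt.comp_hasDerivAt t hline
    rw [← inner_gradient_left] at hcomp
    exact ((hcomp.sub_const (f x)).sub ((hasDerivAt_id t).mul_const ⟪∇ f x, v⟫)).congr_deriv
      (by rw [one_mul, inner_sub_left])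
  have hasDerivAt_quadratic (t : ℝ) :
      HasDerivAt (fun t : ℝ => C / 2 * ‖v‖ ^ 2 * t ^ 2) (C * ‖v‖ ^ 2 * t) t :=
    ((hasDerivAt_pow 2 t).const_mul _).congr_deriv (by push_cast; ring)
  have deriv_le (t : ℝ) (ht : t ∈ Set.Ico (0 : ℝ) 1) :
      ‖⟪∇ f (x + t • v) - ∇ f x, v⟫‖ ≤ C * ‖v‖ ^ 2 * t :=
    calc ‖⟪∇ f (x + t • v) - ∇ f x, v⟫‖
        ≤ ‖∇ f (x + t • v) - ∇ f x‖ * ‖v‖ := norm_inner_le_norm _ _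
      _ ≤ C * ‖x + t • v - x‖ * ‖v‖ := by gcongr; exact hC.norm_sub_le _ _
      _ = C * ‖v‖ ^ 2 * t := by
          rw [add_sub_cancel_left, norm_smul, Real.norm_of_nonneg ht.1]
          ring
  simpa using image_norm_le_of_norm_deriv_right_le_deriv_boundary
    (fun t _ => (hasDerivAt_remainder t).continuousAt.continuousWithinAt)
    (fun t _ => (hasDerivAt_remainder t).hasDerivWithinAt) (by simp)
    hasDerivAt_quadratic deriv_le (Set.right_mem_Icc.2 zero_le_one)

theorem quadraticUpperBound_of_lipschitzWith_gradient (hf : Differentiable ℝ f)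
    (hC : LipschitzWith C (∇ f)) : QuadraticUpperBound f C := fun x v => by
  linarith [(abs_le.1 (abs_sub_sub_inner_gradient_le hf hC x v)).2]

theorem quadraticLowerBound_of_lipschitzWith_gradient (hf : Differentiable ℝ f)
    (hC : LipschitzWith C (∇ f)) : QuadraticLowerBound f (-C) := fun x v => by
  linarith [(abs_le.1 (abs_sub_sub_inner_gradient_le hf hC x v)).1]

theorem differentiable_gradient_of_contDiff_two (hf : ContDiff ℝ 2 f) : Differentiable ℝ (∇ f) :=
  (InnerProductSpace.toDual ℝ E).symm.toContinuousLinearEquiv.differentiable.comp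
    ((hf.fderiv_right (m := 1) (by norm_num)).differentiable (by norm_num))

theorem quadraticLowerBound_of_norm_fderiv_gradient_le (hf : Differentiable ℝ f)
    (hf' : Differentiable ℝ (∇ f)) {H : ℝ} (hH : ∀ x, ‖fderiv ℝ (∇ f) x‖ ≤ H) :
    QuadraticLowerBound f (-H) := by
  lift H to ℝ≥0 using (norm_nonneg _).trans (hH 0)
  exact quadraticLowerBound_of_lipschitzWith_gradient hf
    (lipschitzWith_of_nnnorm_fderiv_le hf' hH)

theorem QuadraticLowerBound.le_of_quadraticUpperBound [Nontrivial E]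
    (hm : QuadraticLowerBound f m) (hM : QuadraticUpperBound f M) : m ≤ M := by
  obtain ⟨v, hv⟩ := exists_ne (0 : E)
  have hle : m / 2 * ‖v‖ ^ 2 ≤ M / 2 * ‖v‖ ^ 2 := by linarith [hm 0 v, hM 0 v]
  linarith [le_of_mul_le_mul_right hle (by positivity)]

theorem gradient_eq_zero_of_forall_le (hmin : ∀ x, f ω ≤ f x) : ∇ f ω = 0 := by
  have hloc : IsLocalMin f ω := Filter.Eventually.of_forall hmin
  rw [gradient, hloc.fderiv_eq_zero, map_zero]

theorem QuadraticUpperBound.le_sub_of_forall_le (hM : QuadraticUpperBound f M) (hM₀ : 0 < M)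
    (hmin : ∀ x, f ω ≤ f x) (x : E) : f ω ≤ f x - ‖∇ f x‖ ^ 2 / (2 * M) :=
  calc f ω ≤ f (x + -(1 / M) • ∇ f x) := hmin _
    _ ≤ f x + ⟪∇ f x, -(1 / M) • ∇ f x⟫ + M / 2 * ‖-(1 / M) • ∇ f x‖ ^ 2 := hM _ _
    _ = f x - ‖∇ f x‖ ^ 2 / (2 * M) := by
        rw [real_inner_smul_right, real_inner_self_eq_norm_sq, norm_smul, mul_pow,
          Real.norm_eq_abs, sq_abs]
        field_simp
        ring

theorem QuadraticUpperBound.sub_le_of_forall_le (hM : QuadraticUpperBound f M)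
    (hmin : ∀ x, f ω ≤ f x) (x : E) : f x - f ω ≤ M / 2 * ‖x - ω‖ ^ 2 := by
  have h := hM ω (x - ω)
  rw [gradient_eq_zero_of_forall_le hmin, inner_zero_left, add_sub_cancel] at h
  linarith

theorem norm_gradient_step_sub_sq_le (hM : QuadraticUpperBound f M) (hM₀ : 0 < M)
    (hm : QuadraticLowerBound f m) (hmin : ∀ x, f ω ≤ f x) (x : E) :
    ‖x - (1 / M) • ∇ f x - ω‖ ^ 2 ≤ (1 - m / M) * ‖x - ω‖ ^ 2 := by
  have inner_ge : ‖∇ f x‖ ^ 2 / (2 * M) + m / 2 * ‖x - ω‖ ^ 2 ≤ ⟪x - ω, ∇ f x⟫ := by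
    have hlower := hm x (ω - x)
    rw [add_sub_cancel, ← neg_sub x ω, inner_neg_right, norm_neg, real_inner_comm] at hlower
    linarith [hM.le_sub_of_forall_le hM₀ hmin x]
  calc ‖x - (1 / M) • ∇ f x - ω‖ ^ 2
      = ‖x - ω‖ ^ 2 - 2 / M * ⟪x - ω, ∇ f x⟫ + ‖∇ f x‖ ^ 2 / M ^ 2 := by
        rw [sub_right_comm, norm_sub_sq_real, real_inner_smul_right, norm_smul, mul_pow,
          Real.norm_eq_abs, sq_abs]
        ring
    _ ≤ ‖x - ω‖ ^ 2 - 2 / M * (‖∇ f x‖ ^ 2 / (2 * M) + m / 2 * ‖x - ω‖ ^ 2)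
          + ‖∇ f x‖ ^ 2 / M ^ 2 := by gcongr
    _ = (1 - m / M) * ‖x - ω‖ ^ 2 := by
        field_simp
        ring

theorem norm_gradient_descent_sub_sq_le (hM : QuadraticUpperBound f M) (hM₀ : 0 < M)
    (hm : QuadraticLowerBound f m) (hmin : ∀ x, f ω ≤ f x) {ψ : ℕ → E}
    (hψ : ∀ k, ψ (k + 1) = ψ k - (1 / M) • ∇ f (ψ k)) (K : ℕ) :
    ‖ψ K - ω‖ ^ 2 ≤ (1 - m / M) ^ K * ‖ψ 0 - ω‖ ^ 2 := by
  rcases subsingleton_or_nontrivial E with _ | _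
  · simp [Subsingleton.elim _ (0 : E)]
  · have hrate : 0 ≤ 1 - m / M :=
      sub_nonneg.2 ((div_le_one hM₀).2 (hm.le_of_quadraticUpperBound hM))
    refine le_geom (u := fun k => ‖ψ k - ω‖ ^ 2) hrate K fun k _ => ?_
    simpa only [hψ k] using norm_gradient_step_sub_sq_le hM hM₀ hm hmin (ψ k)

theorem gradient_descent_sub_le (hM : QuadraticUpperBound f M) (hM₀ : 0 < M)
    (hm : QuadraticLowerBound f m) (hmin : ∀ x, f ω ≤ f x) {ψ : ℕ → E}
    (hψ : ∀ k, ψ (k + 1) = ψ k - (1 / M) • ∇ f (ψ k)) (K : ℕ) :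
    f (ψ K) - f ω ≤ M / 2 * (1 - m / M) ^ K * ‖ψ 0 - ω‖ ^ 2 :=
  calc f (ψ K) - f ω ≤ M / 2 * ‖ψ K - ω‖ ^ 2 := hM.sub_le_of_forall_le hmin _
    _ ≤ M / 2 * ((1 - m / M) ^ K * ‖ψ 0 - ω‖ ^ 2) := by
        gcongr
        exact norm_gradient_descent_sub_sq_le hM hM₀ hm hmin hψ K
    _ = M / 2 * (1 - m / M) ^ K * ‖ψ 0 - ω‖ ^ 2 := (mul_assoc _ _ _).symm

end QuadraticBounds

section ProximalObjective

open scoped Gradient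

variable {E : Type*} [NormedAddCommGroup E] [InnerProductSpace ℝ E]

/-- The loss `ℓ` with a quadratic penalty of weight `γ` for leaving the anchor point `a`. -/
noncomputable def proximalObjective (ℓ : E → ℝ) (γ : ℝ) (a : E) : E → ℝ :=
  fun x => ℓ x + γ / 2 * ‖x - a‖ ^ 2

variable [CompleteSpace E] {ℓ : E → ℝ} {m M : ℝ}

theorem gradient_proximalObjective {x : E} (hℓ : DifferentiableAt ℝ ℓ x) (γ : ℝ) (a : E) :
    ∇ (proximalObjective ℓ γ a) x = ∇ ℓ x + γ • (x - a) := by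
  have hpenalty := (((hasFDerivAt_id x).sub_const a).norm_sq).const_mul (γ / 2)
  refine HasGradientAt.gradient ((hℓ.hasGradientAt.hasFDerivAt.add hpenalty).congr_fderiv ?_)
  ext v
  simp
  ring

theorem proximalObjective_sub_sub_inner_gradient (hℓ : Differentiable ℝ ℓ) (γ : ℝ) (a x v : E) :
    proximalObjective ℓ γ a (x + v) - proximalObjective ℓ γ a x
        - ⟪∇ (proximalObjective ℓ γ a) x, v⟫ =
      ℓ (x + v) - ℓ x - ⟪∇ ℓ x, v⟫ + γ / 2 * ‖v‖ ^ 2 := by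
  rw [gradient_proximalObjective (hℓ x), inner_add_left, real_inner_smul_left]
  simp only [proximalObjective]
  rw [add_sub_right_comm x v a, norm_add_sq_real]
  ring

theorem QuadraticUpperBound.proximalObjective (hM : QuadraticUpperBound ℓ M)
    (hℓ : Differentiable ℝ ℓ) (γ : ℝ) (a : E) :
    QuadraticUpperBound (proximalObjective ℓ γ a) (M + γ) := fun x v => by
  linarith [hM x v, proximalObjective_sub_sub_inner_gradient hℓ γ a x v]

theorem QuadraticLowerBound.proximalObjective (hm : QuadraticLowerBound ℓ m)
    (hℓ : Differentiable ℝ ℓ) (γ : ℝ) (a : E) :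
    QuadraticLowerBound (proximalObjective ℓ γ a) (m + γ) := fun x v => by
  linarith [hm x v, proximalObjective_sub_sub_inner_gradient hℓ γ a x v]

theorem adaptation_error_general (hℓ : Differentiable ℝ ℓ) {L H γ : ℝ}
    (hL : QuadraticUpperBound ℓ L) (hH : QuadraticLowerBound ℓ (-H))
    (hγ : 0 ≤ γ) (hLγ : 0 < L + γ) {ωinf ωtil ωopt : E}
    (hmin : ∀ x, proximalObjective ℓ γ ωinf ωtil ≤ proximalObjective ℓ γ ωinf x)
    {ρ : ℝ} (hρ : ‖ωopt - ωinf‖ ≤ ρ) {ψ : ℕ → E} (hψ₀ : ψ 0 = ωinf)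
    (hψ : ∀ k, ψ (k + 1) = ψ k - (1 / (L + γ)) • ∇ (proximalObjective ℓ γ ωinf) (ψ k)) (K : ℕ) :
    ℓ (ψ K) - ℓ ωopt ≤
      γ * ρ ^ 2 / 2 +
        (L + γ) / 2 * (1 - (γ - H) / (L + γ)) ^ K * ‖ωinf - ωtil‖ ^ 2 := by
  set f := proximalObjective ℓ γ ωinf
  have hlower : QuadraticLowerBound f (γ - H) :=
    neg_add_eq_sub H γ ▸ hH.proximalObjective hℓ γ ωinf
  have optimization_error :
      f (ψ K) - f ωtil ≤
        (L + γ) / 2 * (1 - (γ - H) / (L + γ)) ^ K * ‖ωinf - ωtil‖ ^ 2 :=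
    hψ₀ ▸ gradient_descent_sub_le (hL.proximalObjective hℓ γ ωinf) hLγ hlower hmin hψ K
  have loss_le : ℓ (ψ K) ≤ f (ψ K) := le_add_of_nonneg_right (by positivity)
  have regularization_bias : f ωopt ≤ ℓ ωopt + γ * ρ ^ 2 / 2 :=
    calc f ωopt = ℓ ωopt + γ / 2 * ‖ωopt - ωinf‖ ^ 2 := rfl
      _ ≤ ℓ ωopt + γ / 2 * ρ ^ 2 := by gcongr
      _ = ℓ ωopt + γ * ρ ^ 2 / 2 := by ring
  linarith [hmin ωopt]

end ProximalObjective

/-- **Adaptation Error (Proposition 2).** Under the smoothness and bounded-Hessian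
assumptions with `γ > H ≥ 0`, running `K` gradient-descent steps with step size
`1/(L+γ)` on the regularized adaptation objective `f(ψ) = ℓ(ψ) + (γ/2)‖ψ − ω_∞‖²`
starting from `ψ_0 = ω_∞` yields `ω* = ψ_K` with
`ℓ(ω*) − ℓ(ω_opt) ≤ γρ²/2 + ((L+γ)/2)(1 − (γ−H)/(L+γ))^K ‖ω_∞ − ω̃*‖²`,
where `ω̃*` is the global minimizer of `f` and `‖ω_opt − ω_∞‖ ≤ ρ`. -/
theorem adaptation_error {n : ℕ}
    (ℓ : EuclideanSpace ℝ (Fin n) → ℝ) (hℓ : ContDiff ℝ 2 ℓ)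
    (L : ℝ) (hLnn : 0 ≤ L) (hLip : LipschitzWith L.toNNReal (gradient ℓ))
    (H γ : ℝ) (hH : 0 ≤ H) (hγ : H < γ)
    (hHess : ∀ ψ : EuclideanSpace ℝ (Fin n), ‖fderiv ℝ (gradient ℓ) ψ‖ ≤ H)
    (ωinf : EuclideanSpace ℝ (Fin n))
    (f : EuclideanSpace ℝ (Fin n) → ℝ)
    (hf : ∀ ψ : EuclideanSpace ℝ (Fin n), f ψ = ℓ ψ + γ / 2 * ‖ψ - ωinf‖ ^ 2)
    (ωtil : EuclideanSpace ℝ (Fin n))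
    (hmin : ∀ ψ : EuclideanSpace ℝ (Fin n), f ωtil ≤ f ψ)
    (ωopt : EuclideanSpace ℝ (Fin n)) (ρ : ℝ) (hρ : ‖ωopt - ωinf‖ ≤ ρ)
    (K : ℕ)
    (ψ : ℕ → EuclideanSpace ℝ (Fin n)) (hψ0 : ψ 0 = ωinf)
    (hiter : ∀ k : ℕ, ψ (k + 1) = ψ k - (1 / (L + γ)) • gradient f (ψ k)) :
    ℓ (ψ K) - ℓ ωopt ≤
      γ * ρ ^ 2 / 2 +
        (L + γ) / 2 * (1 - (γ - H) / (L + γ)) ^ K * ‖ωinf - ωtil‖ ^ 2 := by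
  obtain rfl : f = proximalObjective ℓ γ ωinf := funext hf
  have hdiff : Differentiable ℝ ℓ := hℓ.differentiable two_ne_zero
  exact adaptation_error_general hdiff
    (Real.coe_toNNReal L hLnn ▸ quadraticUpperBound_of_lipschitzWith_gradient hdiff hLip)
    (quadraticLowerBound_of_norm_fderiv_gradient_le hdiff
      (differentiable_gradient_of_contDiff_two hℓ) hHess)
    (hH.trans hγ.le) (by linarith)
    hmin hρ hψ0 hiter K
end
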